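/- Let I ⊆ ℝ² be any finite nonempty set. Then there exist constants C > 0 and r₁ > 0 such that for every r with 0 < r ≤ r₁, μ((I ⊕ r) \ I) ≤ C·r, where I ⊕ r = {y ∈ ℝ² : dist(y, I) ≤ r}. (In particular, for any sequence rₙ → 0, the mass μ(I ⊕ rₙ) exceeds μ(I) by at most O(rₙ).) -/

import Mathlib

/-!
The dilation of a finite set `I` by `r` is the union of the closed `r`-balls around its points, so
it suffices to bound the mass of one such ball for `μ₁` and `μ₂`, and to treat `μ₀` separately.

* `μ₀`: the finitely many atoms off `I` stay at positive distance from `I`, so for small `r` the set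
  `(I ⊕ r) \ I` contains no atom and is `μ₀`-null (`exists_radius_disjoint`).
* `μ₁`: by the lower Lipschitz bound, the parameters sent by one curve into a ball of radius `r`
  form a set of diameter at most `2r/c`, hence of mass at most `A₀ · 2r/c` (`curve_closedBall_le`).
* `μ₂`: a disc of radius `r ≤ 1` has area `π r² ≤ π r` and the density is at most `A₀`
  (`density_closedBall_le`).
-/

open MeasureTheory Filter Metric Set Topology

lemma exists_radius_disjoint {X : Type*} [PseudoMetricSpace X] [T1Space X] {A I : Set X}
    (hA : A.Finite) (hI : I.Finite) (hne : I.Nonempty) :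
    ∃ r₁ : ℝ, 0 < r₁ ∧ r₁ ≤ 1 ∧ ∀ a ∈ A, a ∉ I → r₁ < infDist a I := by
  have hev : ∀ᶠ r in 𝓝[>] (0 : ℝ), ∀ a ∈ A, a ∉ I → r < infDist a I := by
    refine (eventually_all_finite hA).2 fun a _ => ?_
    by_cases haI : a ∈ I
    · exact Eventually.of_forall fun _ h => absurd haI h
    · have hpos : 0 < infDist a I := (hI.isClosed.notMem_iff_infDist_pos hne).1 haI
      filter_upwards [nhdsWithin_le_nhds (Iio_mem_nhds hpos)] with r hr _ using hr
  have hone : ∀ᶠ r in 𝓝[>] (0 : ℝ), r ≤ 1 := nhdsWithin_le_nhds (Iic_mem_nhds one_pos)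
  obtain ⟨r, ⟨hr, h1⟩, h0⟩ := ((hev.and hone).and self_mem_nhdsWithin).exists
  exact ⟨r, h0, h1, hr⟩

lemma dilation_subset_iUnion_closedBall {X : Type*} [PseudoMetricSpace X] {I : Set X}
    (hI : I.Finite) (hne : I.Nonempty) (r : ℝ) :
    {y | infDist y I ≤ r} ⊆ ⋃ x ∈ hI.toFinset, closedBall x r := by
  intro y hy
  obtain ⟨x, hx, hxy⟩ := hI.isCompact.exists_infDist_eq_dist hne y
  simp only [mem_iUnion]
  exact ⟨x, hI.mem_toFinset.2 hx, by rw [mem_closedBall, ← hxy]; exact hy⟩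

lemma curve_closedBall_le {E : Type*} [NormedAddCommGroup E] [MeasurableSpace E] [BorelSpace E]
    {A₀ c : ℝ} (hA₀ : 0 ≤ A₀) (hc : 0 < c) {γ : ℝ → E} (hγ : Measurable γ)
    (hlow : ∀ s ∈ Icc (0:ℝ) 1, ∀ t ∈ Icc (0:ℝ) 1, c * |s - t| ≤ ‖γ s - γ t‖)
    {f : ℝ → ℝ} (hf : ∀ t ∈ Icc (0:ℝ) 1, f t ≤ A₀) (x : E) (r : ℝ) :
    Measure.map γ ((volume.restrict (Icc (0:ℝ) 1)).withDensity fun t => ENNReal.ofReal (f t))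
      (closedBall x r) ≤ ENNReal.ofReal (A₀ * (2 * r / c)) := by
  have hm : MeasurableSet (γ ⁻¹' closedBall x r) := hγ measurableSet_closedBall
  rw [Measure.map_apply hγ measurableSet_closedBall, withDensity_apply _ hm,
    Measure.restrict_restrict hm, ENNReal.ofReal_mul hA₀]
  calc ∫⁻ t in γ ⁻¹' closedBall x r ∩ Icc 0 1, ENNReal.ofReal (f t)
      ≤ ∫⁻ _ in γ ⁻¹' closedBall x r ∩ Icc 0 1, ENNReal.ofReal A₀ :=
        setLIntegral_mono' (hm.inter measurableSet_Icc) fun t ht =>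
          ENNReal.ofReal_le_ofReal (hf t ht.2)
    _ = ENNReal.ofReal A₀ * volume (γ ⁻¹' closedBall x r ∩ Icc 0 1) := setLIntegral_const _ _
    _ ≤ ENNReal.ofReal A₀ * ENNReal.ofReal (2 * r / c) := by
        gcongr
        refine (Real.volume_le_diam _).trans (ediam_le fun s hs t ht => ?_)
        rw [edist_dist, Real.dist_eq]
        refine ENNReal.ofReal_le_ofReal ((le_div_iff₀ hc).2 ?_)
        have h1 := hlow s hs.2 t ht.2
        have h2 : dist (γ s) (γ t) ≤ r + r := dist_triangle_right _ _ x |>.trans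
          (add_le_add hs.1 ht.1)
        rw [dist_eq_norm] at h2
        linarith

lemma density_closedBall_le {A₀ : ℝ} (hA₀ : 0 ≤ A₀) {p : EuclideanSpace ℝ (Fin 2) → ℝ}
    (hp : ∀ x, p x ≤ A₀) (x : EuclideanSpace ℝ (Fin 2)) {r : ℝ} (hr : 0 ≤ r) (hr1 : r ≤ 1) :
    (volume.withDensity fun x => ENNReal.ofReal (p x)) (closedBall x r)
      ≤ ENNReal.ofReal (A₀ * (Real.pi * r)) := by
  rw [withDensity_apply _ measurableSet_closedBall, ENNReal.ofReal_mul hA₀]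
  calc ∫⁻ y in closedBall x r, ENNReal.ofReal (p y)
      ≤ ∫⁻ _ in closedBall x r, ENNReal.ofReal A₀ :=
        lintegral_mono fun y => ENNReal.ofReal_le_ofReal (hp y)
    _ = ENNReal.ofReal A₀ * volume (closedBall x r) := setLIntegral_const _ _
    _ ≤ ENNReal.ofReal A₀ * ENNReal.ofReal (Real.pi * r) := by
        gcongr
        rw [EuclideanSpace.volume_closedBall_fin_two, ← ENNReal.ofReal_pow hr,
          ← NNReal.coe_real_pi, ENNReal.ofReal_mul NNReal.pi.coe_nonneg,
          ENNReal.ofReal_coe_nnreal, mul_comm]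
        gcongr
        nlinarith

/-- for every finite nonempty `I ⊆ ℝ²` there are `C > 0` and `r₁ > 0`
with `μ((I ⊕ r) \ I) ≤ C·r` for all `0 < r ≤ r₁`. -/
theorem measure_dilation_minus_finite_set_le
    (a₀ A₀ c L π₀ π₁ π₂ : ℝ)
    (ha₀ : 0 < a₀) (ha₀A₀ : a₀ ≤ A₀) (hc : 0 < c) (hcL : c ≤ L)
    (hπ₀ : 0 < π₀) (hπ₁ : 0 < π₁) (hπ₂ : 0 < π₂) (hπsum : π₀ + π₁ + π₂ = 1)
    (A : Set (EuclideanSpace ℝ (Fin 2))) (hAfin : A.Finite) (hAne : A.Nonempty)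
    (μ₀ : Measure (EuclideanSpace ℝ (Fin 2))) [IsProbabilityMeasure μ₀]
    (hμ₀supp : μ₀ Aᶜ = 0)
    (hμ₀atom : ∀ a ∈ A, ENNReal.ofReal a₀ ≤ μ₀ {a})
    (k : ℕ) (γ : Fin k → ℝ → EuclideanSpace ℝ (Fin 2))
    (hγmeas : ∀ j, Measurable (γ j))
    (hγlow : ∀ j, ∀ s ∈ Icc (0:ℝ) 1, ∀ t ∈ Icc (0:ℝ) 1, c * |s - t| ≤ ‖γ j s - γ j t‖)
    (hγup : ∀ j, ∀ s ∈ Icc (0:ℝ) 1, ∀ t ∈ Icc (0:ℝ) 1, ‖γ j s - γ j t‖ ≤ L * |s - t|)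
    (R : Set (EuclideanSpace ℝ (Fin 2))) (hR : R = ⋃ j, γ j '' Icc (0:ℝ) 1)
    (hAR : A ⊆ R)
    (f : Fin k → ℝ → ℝ) (hfmeas : ∀ j, Measurable (f j))
    (hflow : ∀ j, ∀ t ∈ Icc (0:ℝ) 1, a₀ ≤ f j t)
    (hfup : ∀ j, ∀ t ∈ Icc (0:ℝ) 1, f j t ≤ A₀)
    (μ₁ : Measure (EuclideanSpace ℝ (Fin 2))) [IsProbabilityMeasure μ₁]
    (hμ₁ : μ₁ = ∑ j : Fin k, Measure.map (γ j)
      ((volume.restrict (Icc (0:ℝ) 1)).withDensity fun t => ENNReal.ofReal (f j t)))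
    (p₂ : EuclideanSpace ℝ (Fin 2) → ℝ) (hp₂meas : Measurable p₂)
    (hp₂low : ∀ x, 0 ≤ p₂ x) (hp₂up : ∀ x, p₂ x ≤ A₀)
    (μ₂ : Measure (EuclideanSpace ℝ (Fin 2))) [IsProbabilityMeasure μ₂]
    (hμ₂ : μ₂ = volume.withDensity fun x => ENNReal.ofReal (p₂ x))
    (μ : Measure (EuclideanSpace ℝ (Fin 2)))
    (hμ : μ = ENNReal.ofReal π₀ • μ₀ + ENNReal.ofReal π₁ • μ₁ + ENNReal.ofReal π₂ • μ₂)
    :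
    ∀ I : Set (EuclideanSpace ℝ (Fin 2)), I.Finite → I.Nonempty →
      ∃ C : ℝ, 0 < C ∧ ∃ r₁ : ℝ, 0 < r₁ ∧ ∀ r : ℝ, 0 < r → r ≤ r₁ →
        μ ({y | infDist y I ≤ r} \ I) ≤ ENNReal.ofReal (C * r) := by
  intro I hI hne
  have hA₀ : 0 < A₀ := ha₀.trans_le ha₀A₀
  obtain ⟨r₁, hr₁, hr₁1, hsep⟩ := exists_radius_disjoint hAfin hI hne
  have hN : 0 < (hI.toFinset.card : ℝ) := by
    exact_mod_cast Finset.card_pos.2 (hI.toFinset_nonempty.2 hne)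
  refine ⟨hI.toFinset.card * (k * (A₀ * (2 / c)) + A₀ * Real.pi), ?_, r₁, hr₁, ?_⟩
  · have := Real.pi_pos
    positivity
  intro r hr hrr
  set S := {y | infDist y I ≤ r} \ I with hS
  have h0 : μ₀ S = 0 := by
    refine measure_mono_null (t := Aᶜ) (fun y hy hyA => ?_) hμ₀supp
    exact (hsep y hyA hy.2).not_ge (le_trans hy.1 hrr)
  have hb1 (x) : μ₁ (closedBall x r) ≤ ENNReal.ofReal (k * (A₀ * (2 * r / c))) := by
    rw [hμ₁, Measure.finsetSum_apply, ENNReal.ofReal_mul k.cast_nonneg, ENNReal.ofReal_natCast]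
    refine (Finset.sum_le_card_nsmul _ _ _ fun j _ =>
      curve_closedBall_le hA₀.le hc (hγmeas j) (hγlow j) (hfup j) x r).trans_eq ?_
    simp
  have hb2 (x) : μ₂ (closedBall x r) ≤ ENNReal.ofReal (A₀ * (Real.pi * r)) := by
    rw [hμ₂]
    exact density_closedBall_le hA₀.le hp₂up x hr.le (hrr.trans hr₁1)
  have h12 : (μ₁ + μ₂) S ≤ ENNReal.ofReal
      (hI.toFinset.card * (k * (A₀ * (2 * r / c)) + A₀ * (Real.pi * r))) := by
    rw [ENNReal.ofReal_mul hN.le, ENNReal.ofReal_natCast]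
    refine (measure_mono (sdiff_subset.trans
      (dilation_subset_iUnion_closedBall hI hne r))).trans ?_
    refine (measure_biUnion_finset_le _ _).trans ?_
    refine (Finset.sum_le_card_nsmul _ _ _ fun x _ => ?_).trans_eq (nsmul_eq_mul _ _)
    rw [Measure.add_apply, ENNReal.ofReal_add (by positivity) (by positivity)]
    exact add_le_add (hb1 x) (hb2 x)
  have hw1 : ENNReal.ofReal π₁ ≤ 1 := ENNReal.ofReal_le_one.2 (by linarith)
  have hw2 : ENNReal.ofReal π₂ ≤ 1 := ENNReal.ofReal_le_one.2 (by linarith)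
  calc μ S = ENNReal.ofReal π₁ * μ₁ S + ENNReal.ofReal π₂ * μ₂ S := by simp [hμ, h0]
    _ ≤ 1 * μ₁ S + 1 * μ₂ S := by gcongr
    _ = (μ₁ + μ₂) S := by simp
    _ ≤ _ := h12
    _ = _ := by congr 1; ring
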